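/- For all integers v1, v2, k, t with t ≤ k and with k ≤ v1 + v2, the covering number satisfies C(v1+v2, k, t) ≤ Σ_{s=0}^{t} min_{ℓ : s ≤ ℓ ≤ k−t+s, ℓ ≤ v1, k−ℓ ≤ v2} C(v1, ℓ, s) · C(v2, k−ℓ, t−s). -/

import Mathlib

/-- A `(v,k,t)` covering design: a family of `k`-element subsets (blocks) of a
`v`-element set such that every `t`-element subset is contained in at least one block. -/
def IsCoverDesign (v k t : ℕ) (B : Finset (Finset (Fin v))) : Prop :=
  (∀ b ∈ B, b.card = k) ∧
  ∀ s : Finset (Fin v), s.card = t → ∃ b ∈ B, s ⊆ b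

/-- `coverNumber v k t` is `C(v,k,t)`, the minimum number of blocks in a
`(v,k,t)` covering design. -/
noncomputable def coverNumber (v k t : ℕ) : ℕ :=
  sInf {n : ℕ | ∃ B : Finset (Finset (Fin v)), IsCoverDesign v k t B ∧ B.card = n}

/-!
Split a `t`-subset `T` of a disjoint union of a `v1`-set and a `v2`-set according to the size `s` of
its left part. For each `s`, all unions of a block of a `(v1, ℓ, s)` covering with a block of a
`(v2, k - ℓ, t - s)` covering together cover every `T` of that type, and the value of `ℓ` may be
chosen separately for each `s`.
-/

open Finset

theorem exists_isCoverDesign_card_eq_coverNumber {v k t : ℕ} (htk : t ≤ k) (hkv : k ≤ v) :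
    ∃ B, IsCoverDesign v k t B ∧ #B = coverNumber v k t := by
  refine Nat.sInf_mem (s := {n | ∃ B, IsCoverDesign v k t B ∧ #B = n})
    ⟨_, powersetCard k univ, ⟨fun b hb ↦ (mem_powersetCard.1 hb).2, fun s hs ↦ ?_⟩, rfl⟩
  obtain ⟨b, hsb, hb⟩ :=
    exists_superset_card_eq (hs.trans_le htk) (hkv.trans_eq (Fintype.card_fin v).symm)
  exact ⟨b, mem_powersetCard.2 ⟨subset_univ b, hb⟩, hsb⟩

theorem coverNumber_le_card_of_equiv {α : Type*} {v k t : ℕ} (e : α ≃ Fin v)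
    {B : Finset (Finset α)} (hcard : ∀ b ∈ B, #b = k)
    (hcover : ∀ s : Finset α, #s = t → ∃ b ∈ B, s ⊆ b) : coverNumber v k t ≤ #B := by
  refine Nat.sInf_le ⟨B.map (mapEmbedding e.toEmbedding).toEmbedding,
    ⟨forall_mem_map.2 fun b hb ↦ (card_map _).trans (hcard b hb), fun s hs ↦ ?_⟩, card_map _⟩
  obtain ⟨b, hb, hsb⟩ := hcover (s.map e.symm.toEmbedding) ((card_map _).trans hs)
  exact ⟨b.map e.toEmbedding, mem_map_of_mem _ hb, map_symm_subset.1 hsb⟩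

section Blocks

variable {v₁ v₂ ℓ m s r : ℕ} {A : Finset (Finset (Fin v₁))} {B : Finset (Finset (Fin v₂))}

theorem IsCoverDesign.card_of_mem_image₂_disjSum (hA : IsCoverDesign v₁ ℓ s A)
    (hB : IsCoverDesign v₂ m r B) {b : Finset (Fin v₁ ⊕ Fin v₂)}
    (hb : b ∈ image₂ disjSum A B) : #b = ℓ + m := by
  obtain ⟨a, ha, c, hc, rfl⟩ := mem_image₂.1 hb
  rw [card_disjSum, hA.1 a ha, hB.1 c hc]

theorem IsCoverDesign.exists_mem_image₂_disjSum_superset (hA : IsCoverDesign v₁ ℓ s A)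
    (hB : IsCoverDesign v₂ m r B) {T : Finset (Fin v₁ ⊕ Fin v₂)}
    (hleft : #T.toLeft = s) (hright : #T.toRight = r) :
    ∃ b ∈ image₂ disjSum A B, T ⊆ b := by
  obtain ⟨a, ha, hTa⟩ := hA.2 T.toLeft hleft
  obtain ⟨c, hc, hTc⟩ := hB.2 T.toRight hright
  refine ⟨a.disjSum c, mem_image₂_of_mem ha hc, ?_⟩
  rw [← toLeft_disjSum_toRight (u := T)]
  exact disjSum_mono hTa hTc

end Blocks

theorem coverNumber_add_le_sum_card_mul_card {v₁ v₂ k t : ℕ} {ℓ : ℕ → ℕ}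
    {A : ℕ → Finset (Finset (Fin v₁))} {B : ℕ → Finset (Finset (Fin v₂))}
    (hℓ : ∀ s ≤ t, ℓ s ≤ k) (hA : ∀ s ≤ t, IsCoverDesign v₁ (ℓ s) s (A s))
    (hB : ∀ s ≤ t, IsCoverDesign v₂ (k - ℓ s) (t - s) (B s)) :
    coverNumber (v₁ + v₂) k t ≤ ∑ s ∈ range (t + 1), #(A s) * #(B s) := by
  let D (s : ℕ) : Finset (Finset (Fin v₁ ⊕ Fin v₂)) := image₂ disjSum (A s) (B s)
  have hcard : ∀ b ∈ (range (t + 1)).biUnion D, #b = k := by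
    intro b hb
    obtain ⟨s, hs, hbs⟩ := mem_biUnion.1 hb
    have hst : s ≤ t := mem_range_succ_iff.1 hs
    rw [(hA s hst).card_of_mem_image₂_disjSum (hB s hst) hbs, Nat.add_sub_cancel' (hℓ s hst)]
  have hcover : ∀ T, #T = t → ∃ b ∈ (range (t + 1)).biUnion D, T ⊆ b := by
    intro T hT
    have hsplit : #T.toLeft + #T.toRight = t := card_toLeft_add_card_toRight.trans hT
    have hst : #T.toLeft ≤ t := by omega
    obtain ⟨b, hb, hTb⟩ := (hA _ hst).exists_mem_image₂_disjSum_superset (hB _ hst)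
      (T := T) rfl (by omega)
    exact ⟨b, mem_biUnion.2 ⟨_, mem_range_succ_iff.2 hst, hb⟩, hTb⟩
  calc coverNumber (v₁ + v₂) k t
      ≤ #((range (t + 1)).biUnion D) := coverNumber_le_card_of_equiv finSumFinEquiv hcard hcover
    _ ≤ ∑ s ∈ range (t + 1), #(D s) := card_biUnion_le
    _ ≤ ∑ s ∈ range (t + 1), #(A s) * #(B s) := sum_le_sum fun s _ ↦ card_image₂_le _ _ _

theorem coverNumber_add_le_sum_mul {v₁ v₂ k t : ℕ} {ℓ : ℕ → ℕ}
    (hsℓ : ∀ s ≤ t, s ≤ ℓ s) (hℓk : ∀ s ≤ t, ℓ s + (t - s) ≤ k)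
    (hℓv : ∀ s ≤ t, ℓ s ≤ v₁) (hkv : ∀ s ≤ t, k - ℓ s ≤ v₂) :
    coverNumber (v₁ + v₂) k t ≤
      ∑ s ∈ range (t + 1), coverNumber v₁ (ℓ s) s * coverNumber v₂ (k - ℓ s) (t - s) := by
  choose! A hA hAcard using fun s hs ↦
    exists_isCoverDesign_card_eq_coverNumber (hsℓ s hs) (hℓv s hs)
  choose! B hB hBcard using fun s hs ↦
    exists_isCoverDesign_card_eq_coverNumber (Nat.le_sub_of_add_le' (hℓk s hs)) (hkv s hs)
  refine (coverNumber_add_le_sum_card_mul_card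
    (fun s hs ↦ le_of_add_le_left (hℓk s hs)) hA hB).trans_eq (sum_congr rfl fun s hs ↦ ?_)
  have hst : s ≤ t := mem_range_succ_iff.1 hs
  rw [hAcard s hst, hBcard s hst]

theorem le_sum_biInf_of_forall_le_sum {ι κ : Type*} [Nonempty κ] {S : Finset ι} {P : ι → Set κ}
    {g : ι → κ → ℕ∞} {a : ℕ∞}
    (h : ∀ f : ι → κ, (∀ i ∈ S, f i ∈ P i) → a ≤ ∑ i ∈ S, g i (f i)) :
    a ≤ ∑ i ∈ S, ⨅ x ∈ P i, g i x := by
  by_cases hP : ∀ i ∈ S, (P i).Nonempty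
  · have hmin : ∀ i ∈ S, ∃ x ∈ P i, g i x = ⨅ y ∈ P i, g i y := by
      intro i hi
      rw [← sInf_image]
      exact csInf_mem ((hP i hi).image (g i))
    choose! f hfP hfmin using hmin
    exact (h f hfP).trans_eq (sum_congr rfl hfmin)
  · push Not at hP
    obtain ⟨i, hi, hPi⟩ := hP
    have htop : ⨅ x ∈ P i, g i x = ⊤ := by rw [hPi, iInf_emptyset]
    exact (le_top.trans_eq htop.symm).trans
      (single_le_sum_of_canonicallyOrdered (f := fun i ↦ ⨅ x ∈ P i, g i x) hi)

/-- Combining smaller coverings: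
`C(v1+v2,k,t) ≤ Σ_{s=0}^{t} min_{ℓ : s ≤ ℓ ≤ k−t+s, ℓ ≤ v1, k−ℓ ≤ v2} C(v1,ℓ,s)·C(v2,k−ℓ,t−s)`
(the infimum over an empty range being `⊤` in `ℕ∞`). -/
theorem combining_coverings (v1 v2 k t : ℕ) (htk : t ≤ k) (hk : k ≤ v1 + v2) :
    (coverNumber (v1 + v2) k t : ℕ∞) ≤
      ∑ s ∈ Finset.range (t + 1),
        ⨅ ℓ ∈ {ℓ : ℕ | s ≤ ℓ ∧ ℓ ≤ k - t + s ∧ ℓ ≤ v1 ∧ k - ℓ ≤ v2},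
          (coverNumber v1 ℓ s * coverNumber v2 (k - ℓ) (t - s) : ℕ∞) := by
  refine le_sum_biInf_of_forall_le_sum fun ℓ hℓ ↦ ?_
  have hℓ' (s : ℕ) (hs : s ≤ t) := hℓ s (mem_range_succ_iff.2 hs)
  have hℓk (s : ℕ) (hs : s ≤ t) : ℓ s + (t - s) ≤ k := by
    have : ℓ s ≤ k - t + s := (hℓ' s hs).2.1
    omega
  exact_mod_cast coverNumber_add_le_sum_mul (fun s hs ↦ (hℓ' s hs).1) hℓk
    (fun s hs ↦ (hℓ' s hs).2.2.1) (fun s hs ↦ (hℓ' s hs).2.2.2)
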